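/- Let ω ⊂ ℝ^d be a nonempty open connected set, v : ℝ^d → ℝ^d a Lipschitz, uniformly bounded vector field, and μ⁰ a compactly supported probability measure on ℝ^d. Suppose there exist T₀* > 0 and a nonempty open set ω₀ with closure contained in ω such that for each x⁰ ∈ supp(μ⁰) there exists t⁰ ∈ [0, T₀*] with Φ_{t⁰}^v(x⁰) ∈ ω₀. Then there exists a pair (𝟙_ω u, μ) consisting of a Borel vector field 𝟙_ω u : ℝ^d × ℝ⁺ → ℝ^d vanishing outside ω and a time-evolving compactly supported measure μ, such that (μ, v + 𝟙_ω u) is a weak solution of ∂_t μ + ∇·((v + 𝟙_ω u) μ) = 0 on [0, T₀*] with μ(0) = μ⁰ and supp(μ(T₀*)) ⊂ ω. -/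

import Mathlib

open MeasureTheory Set
open scoped ENNReal NNReal

noncomputable section

/-- The Euclidean space `ℝ^d`. -/
abbrev Euc (d : ℕ) := EuclideanSpace ℝ (Fin d)

/-- The support of a Borel measure: points all of whose open neighborhoods have
positive measure. -/
def msupport {d : ℕ} (μ : Measure (Euc d)) : Set (Euc d) :=
  {x | ∀ U : Set (Euc d), IsOpen U → x ∈ U → 0 < μ U}

/-- `Φ` is the flow of the (time-dependent) vector field `w`, in the Carathéodory
(integral) sense. -/
def IsFlow {d : ℕ} (w : Euc d → ℝ → Euc d) (Φ : ℝ → Euc d → Euc d) : Prop :=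
  ∀ x t, Φ t x = x + ∫ s in (0:ℝ)..t, w (Φ s x) s

/-- `(μ, w)` is a weak solution of the continuity equation
`∂ₜ μ + ∇·(w μ) = 0` on the time interval `[0, T]`. -/
def IsWeakSolutionOn {d : ℕ} (T : ℝ) (w : Euc d → ℝ → Euc d)
    (μ : ℝ → Measure (Euc d)) : Prop :=
  (∫⁻ t in Icc (0:ℝ) T, ∫⁻ x, (‖w x t‖₊ : ℝ≥0∞) ∂(μ t)) < ⊤ ∧
  ∀ ψ : Euc d → ℝ, ContDiff ℝ (⊤ : ℕ∞) ψ → HasCompactSupport ψ →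
    ∀ t ∈ Icc (0:ℝ) T,
      (∫ x, ψ x ∂(μ t)) - (∫ x, ψ x ∂(μ 0))
        = ∫ s in Icc (0:ℝ) t, (∫ x, (inner ℝ (gradient ψ x) (w x s) : ℝ) ∂(μ s))

/-!
Stop each trajectory of `v` when it first enters the closed set `F = closure ω₀ ⊆ ω`, by taking
`u = -v` on `F` and `u = 0` elsewhere. The hitting time of a closed set is lower semicontinuous in
the starting point, so the stopped flow is Borel. The field `v + u` is discontinuous, but every
stopped trajectory solves its equation except at one time; integrating the chain rule for a test
function along trajectories against `μ⁰` shows that the image of `μ⁰` under the stopped flow is a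
weak solution. Since `μ⁰`-almost every trajectory has entered `F` by time `T₀*`, all the mass is
then in `F`.
-/

open Filter Function

section MeasureSupport

variable {d : ℕ}

lemma msupport_eq_support (μ : Measure (Euc d)) : msupport μ = μ.support := by
  simp only [msupport, Measure.support_eq_forall_isOpen, imp.swap]

lemma ae_mem_msupport (μ : Measure (Euc d)) : ∀ᵐ x ∂μ, x ∈ msupport μ := by
  rw [msupport_eq_support]
  exact Measure.support_mem_ae

lemma isClosed_msupport (μ : Measure (Euc d)) : IsClosed (msupport μ) := by
  rw [msupport_eq_support]
  exact Measure.isClosed_support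

lemma msupport_map_subset {Ω : Type*} [MeasurableSpace Ω] {P : Measure Ω} {f : Ω → Euc d}
    (hf : AEMeasurable f P) {Z : Set (Euc d)} (hZ : IsClosed Z) (hfZ : ∀ᵐ o ∂P, f o ∈ Z) :
    msupport (P.map f) ⊆ Z := by
  rw [msupport_eq_support]
  exact Measure.support_subset_of_isClosed hZ ((ae_map_iff hf hZ.measurableSet).2 hfZ)

end MeasureSupport

section IntegralEquation

variable {E : Type*} [NormedAddCommGroup E]

lemma aestronglyMeasurable_restrict_of_ordConnected {f : ℝ → E} {I : Set ℝ} (hI : I.OrdConnected)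
    (hf : ∀ a ∈ I, ∀ b ∈ I, IntervalIntegrable f volume a b) :
    AEStronglyMeasurable f (volume.restrict I) := by
  have hI_ae : interior I =ᵐ[volume] I :=
    interior_ae_eq_of_null_frontier (hI.convex.addHaar_frontier volume)
  rw [← Measure.restrict_congr_set hI_ae]
  refine LocallyIntegrableOn.aestronglyMeasurable fun a ha => ?_
  obtain ⟨ε, hε, hball⟩ :=
    Metric.nhds_basis_closedBall.mem_iff.1 (mem_interior_iff_mem_nhds.1 ha)
  rw [Real.closedBall_eq_Icc] at hball
  have hle : a - ε ≤ a + ε := by linarith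
  have hint := hf _ (hball (left_mem_Icc.2 hle)) _ (hball (right_mem_Icc.2 hle))
  exact ⟨Icc (a - ε) (a + ε),
    mem_nhdsWithin_of_mem_nhds (Icc_mem_nhds (by linarith) (by linarith)),
    (intervalIntegrable_iff_integrableOn_Icc_of_le hle).1 hint⟩

variable [NormedSpace ℝ E] {v : E → E} {γ : ℝ → E} {x : E}

-- Where the integral is undefined, its junk value `0` forces `γ = x`, so `v ∘ γ` is constant there.
lemma aestronglyMeasurable_of_integral_equation
    (hγ : ∀ t, γ t = x + ∫ s in (0 : ℝ)..t, v (γ s)) :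
    AEStronglyMeasurable (fun s => v (γ s)) volume := by
  let I : Set ℝ := {t | IntervalIntegrable (fun s => v (γ s)) volume 0 t}
  have hsub : ∀ a ∈ I, ∀ b ∈ I, IntervalIntegrable (fun s => v (γ s)) volume a b :=
    fun a ha b hb => IntervalIntegrable.trans (IntervalIntegrable.symm ha) hb
  have hI : I.OrdConnected := ⟨fun a ha b hb c hc =>
    IntervalIntegrable.trans ha ((hsub a ha b hb).mono_set
      (uIcc_subset_uIcc_left (Icc_subset_uIcc hc)))⟩
  have hconst : ∀ t ∈ Iᶜ, v (γ t) = v x := fun t ht => by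
    rw [hγ t, intervalIntegral.integral_undef ht, add_zero]
  rw [← Measure.restrict_univ (μ := volume), ← union_compl_self I, aestronglyMeasurable_union_iff]
  exact ⟨aestronglyMeasurable_restrict_of_ordConnected hI hsub,
    aestronglyMeasurable_const.congr
      (ae_restrict_of_forall_mem hI.measurableSet.compl fun t ht => (hconst t ht).symm)⟩

lemma continuous_of_integral_equation {C : ℝ} (hC : ∀ y, ‖v y‖ ≤ C)
    (hγ : ∀ t, γ t = x + ∫ s in (0 : ℝ)..t, v (γ s)) : Continuous γ := by
  have hint : ∀ a b, IntervalIntegrable (fun s => v (γ s)) volume a b := fun a b =>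
    (intervalIntegrable_const (c := C)).mono_fun
      (aestronglyMeasurable_of_integral_equation hγ).restrict
      (Eventually.of_forall fun s => (hC _).trans (le_abs_self C))
  rw [funext hγ]
  exact continuous_const.add (intervalIntegral.continuous_primitive hint 0)

lemma hasDerivAt_of_integral_equation [CompleteSpace E] (hv : Continuous v) {C : ℝ}
    (hC : ∀ y, ‖v y‖ ≤ C) (hγ : ∀ t, γ t = x + ∫ s in (0 : ℝ)..t, v (γ s)) (t : ℝ) :
    HasDerivAt γ (v (γ t)) t := by
  have hvγ : Continuous fun s => v (γ s) := hv.comp (continuous_of_integral_equation hC hγ)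
  have hprim := ((hvγ.integral_hasStrictDerivAt 0 t).hasDerivAt).const_add x
  rwa [← funext hγ] at hprim

end IntegralEquation

namespace IsFlow

variable {d : ℕ} {Φ : ℝ → Euc d → Euc d}

lemma apply_zero {w : Euc d → ℝ → Euc d} (hΦ : IsFlow w Φ) (x : Euc d) : Φ 0 x = x := by
  simpa only [intervalIntegral.integral_same, add_zero] using hΦ x 0

lemma reverse {w : Euc d → ℝ → Euc d} (hΦ : IsFlow w Φ) :
    IsFlow (fun x t => -w x (-t)) (fun t => Φ (-t)) := by
  intro x t
  rw [intervalIntegral.integral_neg,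
    intervalIntegral.integral_comp_neg (fun s => w (Φ s x) s), neg_zero,
    ← intervalIntegral.integral_symm]
  exact hΦ x (-t)

variable {v : Euc d → Euc d} {K : ℝ≥0} {C : ℝ}

lemma hasDerivAt (hΦ : IsFlow (fun x _ => v x) Φ) (hv : Continuous v) (hC : ∀ x, ‖v x‖ ≤ C)
    (x : Euc d) (t : ℝ) : HasDerivAt (fun s => Φ s x) (v (Φ t x)) t :=
  hasDerivAt_of_integral_equation hv hC (hΦ x) t

lemma dist_le_mul_exp (hΦ : IsFlow (fun x _ => v x) Φ) (hv : LipschitzWith K v)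
    (hC : ∀ x, ‖v x‖ ≤ C) {t : ℝ} (ht : 0 ≤ t) (x y : Euc d) :
    dist (Φ t x) (Φ t y) ≤ dist x y * Real.exp (K * t) := by
  have hderiv := hΦ.hasDerivAt hv.continuous hC
  have hcont : ∀ z, Continuous fun s => Φ s z := fun z => continuous_of_integral_equation hC (hΦ z)
  simpa only [sub_zero] using
    dist_le_of_trajectories_ODE (v := fun _ => v) (δ := dist x y) (fun _ => hv)
      (hcont x).continuousOn (fun s _ => (hderiv x s).hasDerivWithinAt)
      (hcont y).continuousOn (fun s _ => (hderiv y s).hasDerivWithinAt)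
      (by rw [hΦ.apply_zero, hΦ.apply_zero]) t (right_mem_Icc.2 ht)

lemma continuous_of_nonneg (hΦ : IsFlow (fun x _ => v x) Φ) (hv : LipschitzWith K v)
    (hC : ∀ x, ‖v x‖ ≤ C) {t : ℝ} (ht : 0 ≤ t) : Continuous (Φ t) := by
  refine (LipschitzWith.of_dist_le_mul (K := (Real.exp (K * t)).toNNReal) fun x y => ?_).continuous
  rw [Real.coe_toNNReal _ (Real.exp_nonneg _), mul_comm]
  exact hΦ.dist_le_mul_exp hv hC ht x y

lemma continuous_apply (hΦ : IsFlow (fun x _ => v x) Φ) (hv : LipschitzWith K v)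
    (hC : ∀ x, ‖v x‖ ≤ C) (t : ℝ) : Continuous (Φ t) := by
  rcases le_total 0 t with ht | ht
  · exact hΦ.continuous_of_nonneg hv hC ht
  · have hback := hΦ.reverse.continuous_of_nonneg hv.neg
      (fun x => (norm_neg (v x)).trans_le (hC x)) (neg_nonneg.2 ht)
    rwa [neg_neg] at hback

lemma continuous_uncurry (hΦ : IsFlow (fun x _ => v x) Φ) (hv : LipschitzWith K v)
    (hC : ∀ x, ‖v x‖ ≤ C) : Continuous (uncurry Φ) := by
  have hderiv := hΦ.hasDerivAt hv.continuous hC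
  refine continuous_prod_of_continuous_lipschitzWith _ C.toNNReal (hΦ.continuous_apply hv hC)
    fun x => lipschitzWith_of_nnnorm_deriv_le (fun t => (hderiv x t).differentiableAt) fun t => ?_
  have hspeed : deriv (fun s => uncurry Φ (s, x)) t = v (Φ t x) := (hderiv x t).deriv
  rw [hspeed]
  exact NNReal.coe_le_coe.1 ((hC _).trans (Real.le_coe_toNNReal C))

end IsFlow

section HittingTime

variable {ι X Y : Type*} [ConditionallyCompleteLinearOrder ι] [TopologicalSpace ι] [OrderTopology ι]
  [TopologicalSpace Y] {u : ι → X → Y} {F : Set Y} {n m : ι}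

lemma apply_hittingBtwn_mem_of_isClosed {x : X} (hu : Continuous fun i => u i x) (hF : IsClosed F)
    (hx : ∃ i ∈ Icc n m, u i x ∈ F) : u (hittingBtwn u F n m x) x ∈ F := by
  have hmem : sInf (Icc n m ∩ {i | u i x ∈ F}) ∈ Icc n m ∩ {i | u i x ∈ F} :=
    (isClosed_Icc.inter (hF.preimage hu)).csInf_mem hx bddBelow_Icc.inter_of_left
  simp only [hittingBtwn_def, if_pos hx]
  exact hmem.2

-- The sublevel sets are projections of closed sets along the compact interval `[n, a]`.
lemma lowerSemicontinuous_hittingBtwn [TopologicalSpace X] (hu : Continuous (uncurry u))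
    (hF : IsClosed F) : LowerSemicontinuous (hittingBtwn u F n m) := by
  rw [lowerSemicontinuous_iff_isClosed_preimage]
  intro a
  rcases le_or_gt m a with hma | ham
  · rw [preimage_eq_univ_iff.2 (range_subset_iff.2 fun x => (hittingBtwn_le x).trans hma)]
    exact isClosed_univ
  have hsublevel : hittingBtwn u F n m ⁻¹' Iic a
      = Prod.snd '' ((fun q : Icc n a × X => ((q.1 : ι), q.2)) ⁻¹' (uncurry u ⁻¹' F)) := by
    ext x
    constructor
    · intro hxa
      have hx : ∃ i ∈ Icc n m, u i x ∈ F := by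
        by_contra hx
        exact ham.not_ge ((hittingBtwn_eq_end_iff.2 fun h => absurd h hx).ge.trans hxa)
      exact ⟨(⟨_, le_hittingBtwn_of_exists hx, hxa⟩, x),
        apply_hittingBtwn_mem_of_isClosed (hu.comp (Continuous.prodMk_left x)) hF hx, rfl⟩
    · rintro ⟨⟨i, x⟩, hi, rfl⟩
      exact (hittingBtwn_le_of_mem i.2.1 (i.2.2.trans ham.le) hi).trans i.2.2
  rw [hsublevel]
  exact isClosedMap_snd_of_compactSpace _ ((hF.preimage hu).preimage (by fun_prop))

end HittingTime

/-- `γ` solves `γ'(t) = w (γ t) t` on `[0, T]` in a sense suited to discontinuous fields `w`: it is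
continuous, and differentiable with the prescribed velocity off a countable set of times, which is
what the fundamental theorem of calculus requires. -/
def IsSolutionOffCountable {E : Type*} [NormedAddCommGroup E] [NormedSpace ℝ E]
    (w : E → ℝ → E) (T : ℝ) (γ : ℝ → E) : Prop :=
  ContinuousOn γ (Icc 0 T) ∧
    ∃ S : Set ℝ, S.Countable ∧ ∀ t ∈ Ioo 0 T \ S, HasDerivAt γ (w (γ t) t) t

namespace IsSolutionOffCountable

variable {E : Type*} [NormedAddCommGroup E] [NormedSpace ℝ E] {T : ℝ} {γ : ℝ → E}

lemma mono {w : E → ℝ → E} (hγ : IsSolutionOffCountable w T γ) {t : ℝ} (ht : t ≤ T) :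
    IsSolutionOffCountable w t γ := by
  obtain ⟨hcont, S, hS, hderiv⟩ := hγ
  exact ⟨hcont.mono (Icc_subset_Icc_right ht), S, hS,
    fun s hs => hderiv s ⟨Ioo_subset_Ioo_right ht hs.1, hs.2⟩⟩

lemma setIntegral_fderiv_eq_sub {w : E → ℝ → E} (hγ : IsSolutionOffCountable w T γ) (hT : 0 ≤ T)
    {G : Type*} [NormedAddCommGroup G] [NormedSpace ℝ G] [CompleteSpace G] {ψ : E → G}
    (hψ : Differentiable ℝ ψ)
    (hint : IntegrableOn (fun s => fderiv ℝ ψ (γ s) (w (γ s) s)) (Icc 0 T)) :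
    ∫ s in Icc 0 T, fderiv ℝ ψ (γ s) (w (γ s) s) = ψ (γ T) - ψ (γ 0) := by
  obtain ⟨hcont, S, hS, hderiv⟩ := hγ
  rw [integral_Icc_eq_integral_Ioc, ← intervalIntegral.integral_of_le hT]
  exact integral_eq_of_hasDerivAt_off_countable_of_le (fun s => ψ (γ s)) _ hT hS
    (hψ.continuous.comp_continuousOn hcont)
    (fun s hs => (hψ (γ s)).hasFDerivAt.comp_hasDerivAt s (hderiv s hs))
    ((intervalIntegrable_iff_integrableOn_Icc_of_le hT).2 hint)

lemma stopped {v : E → E} (hγ : ∀ t, HasDerivAt γ (v (γ t)) t) {F : Set E} {τ : ℝ}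
    (hF : γ τ ∈ F) (hlt : ∀ t, 0 ≤ t → t < τ → γ t ∉ F) (T : ℝ) :
    IsSolutionOffCountable (fun x _ => Fᶜ.indicator v x) T (fun t => γ (min t τ)) := by
  have hcont : Continuous γ := continuous_iff_continuousAt.2 fun t => (hγ t).continuousAt
  refine ⟨(hcont.comp (continuous_id.min continuous_const)).continuousOn, {τ},
    countable_singleton τ, fun t ⟨ht, htτ⟩ => ?_⟩
  rcases lt_or_gt_of_ne htτ with hbefore | hafter
  · simp only [min_eq_left hbefore.le, indicator_of_mem (mem_compl (hlt t ht.1.le hbefore))]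
    refine (hγ t).congr_of_eventuallyEq ?_
    filter_upwards [Iio_mem_nhds hbefore] with s hs
    rw [min_eq_left (le_of_lt hs)]
  · simp only [min_eq_right hafter.le, indicator_of_notMem (notMem_compl_iff.2 hF)]
    refine (hasDerivAt_const t (γ τ)).congr_of_eventuallyEq ?_
    filter_upwards [Ioi_mem_nhds hafter] with s hs
    rw [min_eq_right (le_of_lt hs)]

end IsSolutionOffCountable

lemma lintegral_lintegral_nnnorm_lt_top {X G : Type*} [MeasurableSpace X] [NormedAddCommGroup G]
    {w : X → ℝ → G} {C T : ℝ} (hC : ∀ x t, ‖w x t‖ ≤ C) {μ : ℝ → Measure X} {M : ℝ≥0∞}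
    (hM : M ≠ ⊤) (hμ : ∀ t, μ t univ ≤ M) :
    ∫⁻ t in Icc 0 T, ∫⁻ x, (‖w x t‖₊ : ℝ≥0∞) ∂(μ t) < ⊤ := by
  have hspeed : ∀ x t, (‖w x t‖₊ : ℝ≥0∞) ≤ C.toNNReal := fun x t =>
    ENNReal.coe_le_coe.2 (NNReal.coe_le_coe.1 ((hC x t).trans (Real.le_coe_toNNReal C)))
  calc ∫⁻ t in Icc 0 T, ∫⁻ x, (‖w x t‖₊ : ℝ≥0∞) ∂(μ t)
      ≤ ∫⁻ _ in Icc 0 T, C.toNNReal * M := lintegral_mono fun t =>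
        (lintegral_mono fun x => hspeed x t).trans
          ((lintegral_const _).trans_le (mul_le_mul_right (hμ t) _))
    _ = C.toNNReal * M * volume (Icc 0 T) := setLIntegral_const _ _
    _ < ⊤ := ENNReal.mul_lt_top (ENNReal.mul_lt_top ENNReal.coe_lt_top hM.lt_top)
        measure_Icc_lt_top

section Superposition

variable {E : Type*} [NormedAddCommGroup E] [NormedSpace ℝ E] [MeasurableSpace E] [BorelSpace E]
  [SecondCountableTopology E] {w : E → ℝ → E} {ψ : E → ℝ}

lemma measurable_fderiv_apply_uncurry (hψ : ContDiff ℝ 1 ψ) (hw : Measurable (uncurry w)) :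
    Measurable fun q : E × ℝ => fderiv ℝ ψ q.1 (w q.1 q.2) :=
  (isBoundedBilinearMap_apply (𝕜 := ℝ) (E := E) (F := ℝ)).continuous.measurable.comp
    (((hψ.continuous_fderiv one_ne_zero).measurable.comp measurable_fst).prodMk hw)

variable {Ω : Type*} [MeasurableSpace Ω] {P : Measure Ω} [IsFiniteMeasure P] {X : ℝ → Ω → E}
  {C T : ℝ}

lemma integral_comp_sub_eq_setIntegral_integral_fderiv (hw : Measurable (uncurry w))
    (hC : ∀ x t, ‖w x t‖ ≤ C) (hX : Measurable (uncurry X)) (hT : 0 ≤ T)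
    (hsol : ∀ᵐ o ∂P, IsSolutionOffCountable w T fun t => X t o)
    (hψ : ContDiff ℝ 1 ψ) (hψc : HasCompactSupport ψ) :
    ∫ o, ψ (X T o) ∂P - ∫ o, ψ (X 0 o) ∂P
      = ∫ s in Icc 0 T, ∫ o, fderiv ℝ ψ (X s o) (w (X s o) s) ∂P := by
  obtain ⟨A, hA⟩ := hψ.continuous.bounded_above_of_compact_support hψc
  obtain ⟨B, hB⟩ := (hψ.continuous_fderiv one_ne_zero).bounded_above_of_compact_support
    (hψc.fderiv (𝕜 := ℝ))
  let g : Ω → ℝ → ℝ := fun o s => fderiv ℝ ψ (X s o) (w (X s o) s)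
  have hX' : Measurable fun q : Ω × ℝ => X q.2 q.1 := hX.comp measurable_swap
  have hg_meas : Measurable (uncurry g) :=
    (measurable_fderiv_apply_uncurry hψ hw).comp (hX'.prodMk measurable_snd)
  have hg_bound : ∀ o s, ‖g o s‖ ≤ B * C := fun o s =>
    (fderiv ℝ ψ (X s o)).le_of_opNorm_le_of_le (hB _) (hC _ _)
  have hψX : ∀ t, Integrable (fun o => ψ (X t o)) P := fun t =>
    .of_bound (hψ.continuous.measurable.comp
      (hX.comp measurable_prodMk_left)).aestronglyMeasurable A (.of_forall fun o => hA _)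
  have hcurve : ∀ᵐ o ∂P, ψ (X T o) - ψ (X 0 o) = ∫ s in Icc 0 T, g o s := by
    filter_upwards [hsol] with o ho
    exact (ho.setIntegral_fderiv_eq_sub hT (hψ.differentiable one_ne_zero)
      (Integrable.of_bound (hg_meas.comp measurable_prodMk_left).aestronglyMeasurable (B * C)
        (.of_forall (hg_bound o)))).symm
  calc ∫ o, ψ (X T o) ∂P - ∫ o, ψ (X 0 o) ∂P
      = ∫ o, ψ (X T o) - ψ (X 0 o) ∂P := (integral_sub (hψX T) (hψX 0)).symm
    _ = ∫ o, (∫ s in Icc 0 T, g o s) ∂P := integral_congr_ae hcurve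
    _ = ∫ s in Icc 0 T, ∫ o, g o s ∂P := integral_integral_swap
        (.of_bound hg_meas.aestronglyMeasurable (B * C) (.of_forall fun q => hg_bound q.1 q.2))

end Superposition

lemma isWeakSolutionOn_map {Ω : Type*} [MeasurableSpace Ω] {P : Measure Ω} [IsFiniteMeasure P]
    {d : ℕ} {w : Euc d → ℝ → Euc d} {X : ℝ → Ω → Euc d} {C T : ℝ}
    (hw : Measurable (uncurry w)) (hC : ∀ x t, ‖w x t‖ ≤ C) (hX : Measurable (uncurry X))
    (hsol : ∀ᵐ o ∂P, IsSolutionOffCountable w T fun t => X t o) :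
    IsWeakSolutionOn T w (fun t => P.map (X t)) := by
  have hXt : ∀ s, AEMeasurable (X s) P := fun s => (hX.comp measurable_prodMk_left).aemeasurable
  refine ⟨lintegral_lintegral_nnnorm_lt_top hC (measure_ne_top P univ) fun s =>
    (Measure.map_apply_of_aemeasurable (hXt s) .univ).le, fun ψ hψ hψc t ht => ?_⟩
  have hψ1 : ContDiff ℝ 1 ψ := hψ.of_le (by exact_mod_cast le_top)
  have hmeas : ∀ s, Measurable fun x => fderiv ℝ ψ x (w x s) := fun s =>
    (measurable_fderiv_apply_uncurry hψ1 hw).comp measurable_prodMk_right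
  simp only [inner_gradient_left]
  rw [integral_map (hXt t) hψ.continuous.aestronglyMeasurable,
    integral_map (hXt 0) hψ.continuous.aestronglyMeasurable,
    integral_comp_sub_eq_setIntegral_integral_fderiv hw hC hX ht.1
      (hsol.mono fun o ho => ho.mono ht.2) hψ1 hψc]
  exact integral_congr_ae (.of_forall fun s =>
    (integral_map (hXt s) (hmeas s).aestronglyMeasurable).symm)

/-- The flow `Φ` in which each trajectory is frozen from the first time in `[0, T]` at which it lies
in `F` (from time `T` if there is none). -/
def stoppedFlow {X : Type*} (Φ : ℝ → X → X) (F : Set X) (T t : ℝ) (x : X) : X :=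
  Φ (min t (hittingBtwn Φ F 0 T x)) x

section StoppedFlow

variable {X : Type*} {Φ : ℝ → X → X} {F : Set X} {T : ℝ}

lemma stoppedFlow_zero {x : X} (hΦ : Φ 0 x = x) (hx : ∃ t ∈ Icc 0 T, Φ t x ∈ F) :
    stoppedFlow Φ F T 0 x = x := by
  rw [stoppedFlow, min_eq_left (le_hittingBtwn_of_exists hx), hΦ]

variable [TopologicalSpace X]

lemma stoppedFlow_end_mem {x : X} (hΦ : Continuous fun t => Φ t x) (hF : IsClosed F)
    (hx : ∃ t ∈ Icc 0 T, Φ t x ∈ F) : stoppedFlow Φ F T T x ∈ F := by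
  rw [stoppedFlow, min_eq_right (hittingBtwn_le x)]
  exact apply_hittingBtwn_mem_of_isClosed hΦ hF hx

variable [MeasurableSpace X] [BorelSpace X]

lemma measurable_uncurry_stoppedFlow (hΦ : Continuous (uncurry Φ)) (hF : IsClosed F) :
    Measurable (uncurry (stoppedFlow Φ F T)) :=
  hΦ.measurable.comp ((measurable_fst.min
    ((lowerSemicontinuous_hittingBtwn hΦ hF).measurable.comp measurable_snd)).prodMk measurable_snd)

lemma measurable_stoppedFlow (hΦ : Continuous (uncurry Φ)) (hF : IsClosed F) (t : ℝ) :
    Measurable (stoppedFlow Φ F T t) :=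
  (measurable_uncurry_stoppedFlow hΦ hF).comp measurable_prodMk_left

end StoppedFlow

lemma isSolutionOffCountable_stoppedFlow {E : Type*} [NormedAddCommGroup E] [NormedSpace ℝ E]
    {Φ : ℝ → E → E} {v : E → E} {F : Set E} {T : ℝ} {x : E}
    (hΦ : ∀ t, HasDerivAt (fun s => Φ s x) (v (Φ t x)) t) (hF : IsClosed F)
    (hx : ∃ t ∈ Icc 0 T, Φ t x ∈ F) :
    IsSolutionOffCountable (fun y _ => Fᶜ.indicator v y) T (fun t => stoppedFlow Φ F T t x) :=
  .stopped hΦ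
    (apply_hittingBtwn_mem_of_isClosed
      (continuous_iff_continuousAt.2 fun t => (hΦ t).continuousAt) hF hx)
    (fun _ ht hlt => notMem_of_lt_hittingBtwn hlt ht) T

lemma isCompact_msupport_map_stoppedFlow {d : ℕ} {Φ : ℝ → Euc d → Euc d} {F : Set (Euc d)} {T : ℝ}
    (hΦ : Continuous (uncurry Φ)) (hF : IsClosed F) {μ : Measure (Euc d)}
    (hμ : IsCompact (msupport μ)) {t : ℝ} (ht : t ∈ Icc 0 T) :
    IsCompact (msupport (μ.map (stoppedFlow Φ F T t))) := by
  have hreach : IsCompact (uncurry Φ '' (Icc 0 T ×ˢ msupport μ)) :=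
    (isCompact_Icc.prod hμ).image hΦ
  refine hreach.of_isClosed_subset (isClosed_msupport _)
    (msupport_map_subset (measurable_stoppedFlow hΦ hF t).aemeasurable hreach.isClosed ?_)
  filter_upwards [ae_mem_msupport μ] with x hx
  have htime : min t (hittingBtwn Φ F 0 T x) ∈ Icc 0 T :=
    ⟨le_min ht.1 (le_hittingBtwn (ht.1.trans ht.2) x), (min_le_left _ _).trans ht.2⟩
  exact mem_image_of_mem (uncurry Φ) (mk_mem_prod htime hx)

theorem store_mass_borel_general {d : ℕ} {v : Euc d → Euc d} {K : ℝ≥0} (hv : LipschitzWith K v)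
    {C : ℝ} (hC : ∀ x, ‖v x‖ ≤ C) {μ0 : Measure (Euc d)} [IsFiniteMeasure μ0]
    (hμ0 : IsCompact (msupport μ0)) {T : ℝ} {F : Set (Euc d)} (hF : IsClosed F)
    {Φ : ℝ → Euc d → Euc d} (hΦ : IsFlow (fun x _ => v x) Φ)
    (hhit : ∀ x ∈ msupport μ0, ∃ t ∈ Icc 0 T, Φ t x ∈ F) :
    ∃ (u : Euc d → ℝ → Euc d) (μ : ℝ → Measure (Euc d)),
      Measurable (uncurry u) ∧
      (∀ x t, x ∉ F → u x t = 0) ∧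
      (∀ t ∈ Icc 0 T, IsCompact (msupport (μ t))) ∧
      IsWeakSolutionOn T (fun x t => v x + u x t) μ ∧
      μ 0 = μ0 ∧ msupport (μ T) ⊆ F := by
  have hcont : Continuous (uncurry Φ) := hΦ.continuous_uncurry hv hC
  have hderiv := hΦ.hasDerivAt hv.continuous hC
  have hhit_ae : ∀ᵐ x ∂μ0, ∃ t ∈ Icc 0 T, Φ t x ∈ F := (ae_mem_msupport μ0).mono hhit
  have hv_meas : Measurable v := hv.continuous.measurable
  have hfield : (fun x (_ : ℝ) => v x + -F.indicator v x) = fun x _ => Fᶜ.indicator v x := by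
    simp only [indicator_compl, Pi.sub_apply, sub_eq_add_neg]
  refine ⟨fun x _ => -F.indicator v x, fun t => μ0.map (stoppedFlow Φ F T t),
    (hv_meas.indicator hF.measurableSet).neg.comp measurable_fst,
    fun x _ hx => neg_eq_zero.2 (indicator_of_notMem hx v),
    fun t ht => isCompact_msupport_map_stoppedFlow hcont hF hμ0 ht, ?_, ?_,
    msupport_map_subset (measurable_stoppedFlow hcont hF T).aemeasurable hF ?_⟩
  · rw [hfield]
    exact isWeakSolutionOn_map
      ((hv_meas.indicator hF.measurableSet.compl).comp measurable_fst)
      (fun x _ => (norm_indicator_le_norm_self v x).trans (hC x))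
      (measurable_uncurry_stoppedFlow hcont hF)
      (hhit_ae.mono fun x => isSolutionOffCountable_stoppedFlow (hderiv x) hF)
  · exact (Measure.map_congr
      (hhit_ae.mono fun x => stoppedFlow_zero (hΦ.apply_zero x))).trans Measure.map_id
  · exact hhit_ae.mono fun x =>
      stoppedFlow_end_mem (hcont.comp (Continuous.prodMk_left x)) hF

/-- Storing the whole mass of `μ⁰` inside `ω` at time `T₀*`, with a Borel
localized control, in the sense of weak solutions of the continuity equation. -/
theorem store_mass_borel
    (d : ℕ) (ω : Set (Euc d)) (hω : ω.Nonempty) (hωo : IsOpen ω) (hωc : IsConnected ω)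
    (v : Euc d → Euc d) (hvL : ∃ K : ℝ≥0, LipschitzWith K v)
    (hvB : ∃ C : ℝ, ∀ x, ‖v x‖ ≤ C)
    (μ0 : Measure (Euc d)) [IsProbabilityMeasure μ0]
    (h0K : IsCompact (msupport μ0))
    (T0 : ℝ) (hT0 : 0 < T0)
    (ω0 : Set (Euc d)) (hω0 : ω0.Nonempty) (hω0o : IsOpen ω0) (hω0c : closure ω0 ⊆ ω)
    (Φv : ℝ → Euc d → Euc d) (hΦv : IsFlow (fun x _ => v x) Φv)
    (hgeo : ∀ x ∈ msupport μ0, ∃ t ∈ Icc (0:ℝ) T0, Φv t x ∈ ω0) :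
    ∃ (u : Euc d → ℝ → Euc d) (μ : ℝ → Measure (Euc d)),
      Measurable (fun q : Euc d × ℝ => u q.1 q.2) ∧
      (∀ x t, x ∉ ω → u x t = 0) ∧
      (∀ t ∈ Icc (0:ℝ) T0, IsCompact (msupport (μ t))) ∧
      IsWeakSolutionOn T0 (fun x t => v x + u x t) μ ∧
      μ 0 = μ0 ∧ msupport (μ T0) ⊆ ω := by
  obtain ⟨K, hK⟩ := hvL
  obtain ⟨C, hC⟩ := hvB
  obtain ⟨u, μ, hu, hu0, hcompact, hsol, hinit, hend⟩ := store_mass_borel_general hK hC h0K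
    isClosed_closure hΦv fun x hx => (hgeo x hx).imp fun _ ht => ⟨ht.1, subset_closure ht.2⟩
  exact ⟨u, μ, hu, fun x t hx => hu0 x t (notMem_subset hω0c hx), hcompact, hsol, hinit,
    hend.trans hω0c⟩
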